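/- Let T be a tree having l leaves, β branches with at least one end-path, and b ≥ 1 branches with at least two end-paths, and let P_1, …, P_b be the end-palms of T. Then χ_L(T) ≤ 2 − 2b + Σ_{i=1}^{b} χ_L(P_i) ≤ l − β + 2 ≤ l − b + 2. -/

import Mathlib

open SimpleGraph

/-- Distance from a vertex to a set of vertices, `d(u,S) = min {d(u,v) : v ∈ S}`. -/
noncomputable def distToSet {V : Type*} (G : SimpleGraph V) (u : V) (S : Set V) : ℕ :=
  sInf (G.dist u '' S)

/-- `c` is a locating coloring of `G` with `k` colors: a proper coloring such that any two
distinct vertices are resolved by some color class. -/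
def IsLocatingColoring {V : Type*} (G : SimpleGraph V) {k : ℕ} (c : V → Fin k) : Prop :=
  (∀ u v : V, G.Adj u v → c u ≠ c v) ∧
  ∀ u v : V, u ≠ v →
    ∃ i : Fin k, distToSet G u (c ⁻¹' {i}) ≠ distToSet G v (c ⁻¹' {i})

/-- The locating chromatic number `χ_L(G)`: the least `k` admitting a locating `k`-coloring. -/
noncomputable def locatingChromaticNumber {V : Type*} (G : SimpleGraph V) : ℕ :=
  sInf {k : ℕ | ∃ c : V → Fin k, IsLocatingColoring G c}

/-- A walk `p` from `u` to `v` is an *end-path* if it is a path joining a leaf `u` to its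
nearest branch `v`: `u` has degree 1, `v` has degree at least 3, and every internal
vertex of the path has degree 2. -/
def IsEndPath {V : Type*} [Fintype V] (T : SimpleGraph V) [DecidableRel T.Adj]
    {u v : V} (p : T.Walk u v) : Prop :=
  p.IsPath ∧ T.degree u = 1 ∧ 3 ≤ T.degree v ∧
    ∀ w ∈ p.support, w ≠ u → w ≠ v → T.degree w = 2

/-- A vertex is an *end-branch* if it is a branch at which at least two end-paths end. -/
def IsEndBranch {V : Type*} [Fintype V] (T : SimpleGraph V) [DecidableRel T.Adj]
    (v : V) : Prop :=
  ∃ (u₁ u₂ : V) (p₁ : T.Walk u₁ v) (p₂ : T.Walk u₂ v),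
    u₁ ≠ u₂ ∧ IsEndPath T p₁ ∧ IsEndPath T p₂

/-- The *end-palm* of an end-branch `v`: the vertex `v` together with all vertices of
the end-paths ending at `v`. -/
def endPalm {V : Type*} [Fintype V] (T : SimpleGraph V) [DecidableRel T.Adj]
    (v : V) : Set V :=
  {v} ∪ {w | ∃ (u : V) (p : T.Walk u v), IsEndPath T p ∧ w ∈ p.support}

/-!
Color an end-palm by alternating, on each of its legs, a color private to that leg with one color
common to all legs. This is locating, so the palm at `v` needs at most one color more than it has
leaves, and since the palms have disjoint sets of leaves the second inequality follows by counting.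

For the first inequality, start from optimal colorings of the end-palms. Each of them uses at least
three colors, so two colors per palm can be shared by all palms: the color of the center and the
color of one of its neighbors, named so as to agree at the centers with a bipartition of the tree,
which also colors the vertices outside the palms. Inside a palm no distance to a color class
changes. Every palm keeps a private color, and from outside the palm the distance to it is the
distance to the center of the palm plus a constant. Hence a vertex inside a palm is told apart from
the vertices outside by its own palm together with one that is not behind it, and two vertices
outside all palms are told apart by their distances to the end-branches.
-/

section DistToSet

variable {V : Type*} {G : SimpleGraph V} {u v : V} {S S' : Set V}

theorem distToSet_le (hv : v ∈ S) : distToSet G u S ≤ G.dist u v :=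
  Nat.sInf_le ⟨v, hv, rfl⟩

theorem exists_mem_dist_eq_distToSet (hS : S.Nonempty) : ∃ v ∈ S, G.dist u v = distToSet G u S :=
  Nat.sInf_mem (hS.image (G.dist u))

theorem distToSet_empty : distToSet G u ∅ = 0 := by
  simp [distToSet]

theorem distToSet_eq_zero_of_mem (hu : u ∈ S) : distToSet G u S = 0 :=
  Nat.le_zero.1 ((distToSet_le hu).trans_eq dist_self)

theorem distToSet_eq_dist (hv : v ∈ S) (h : ∀ w ∈ S, G.dist u v ≤ G.dist u w) :
    distToSet G u S = G.dist u v := by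
  obtain ⟨w, hw, hd⟩ := exists_mem_dist_eq_distToSet (G := G) (u := u) ⟨v, hv⟩
  exact (distToSet_le hv).antisymm (hd ▸ h w hw)

theorem distToSet_eq_one_of_adj (hG : G.Connected) (huv : G.Adj u v) (hv : v ∈ S) (hu : u ∉ S) :
    distToSet G u S = 1 := by
  rw [distToSet_eq_dist hv fun w hw => ?_] <;> rw [dist_eq_one_iff_adj.2 huv]
  exact hG.pos_dist_of_ne fun h => hu (h ▸ hw)

theorem distToSet_eq_of_subset (h : S ⊆ S')
    (h' : ∀ w ∈ S', ∃ w' ∈ S, G.dist u w' ≤ G.dist u w) :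
    distToSet G u S = distToSet G u S' := by
  rcases S'.eq_empty_or_nonempty with rfl | ⟨w₀, hw₀⟩
  · rw [Set.subset_empty_iff.1 h]
  obtain ⟨v₀, hv₀, -⟩ := h' w₀ hw₀
  apply le_antisymm
  · obtain ⟨w, hw, hd⟩ := exists_mem_dist_eq_distToSet (G := G) (u := u) ⟨w₀, hw₀⟩
    obtain ⟨w', hw', hle⟩ := h' w hw
    exact hd ▸ (distToSet_le hw').trans hle
  · obtain ⟨v, hv, hd⟩ := exists_mem_dist_eq_distToSet (G := G) (u := u) ⟨v₀, hv₀⟩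
    exact hd ▸ distToSet_le (h hv)

theorem distToSet_le_dist_add (hG : G.Connected) (hS : S.Nonempty) :
    distToSet G u S ≤ G.dist u v + distToSet G v S := by
  obtain ⟨w, hw, hd⟩ := exists_mem_dist_eq_distToSet (G := G) (u := v) hS
  exact hd ▸ (distToSet_le hw).trans hG.dist_triangle

theorem distToSet_eq_dist_add (hG : G.Connected) (hS : S.Nonempty)
    (h : ∀ w ∈ S, G.dist u v + G.dist v w = G.dist u w) :
    distToSet G u S = G.dist u v + distToSet G v S := by
  refine (distToSet_le_dist_add hG hS).antisymm ?_
  obtain ⟨w, hw, hd⟩ := exists_mem_dist_eq_distToSet (G := G) (u := u) hS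
  rw [← hd, ← h w hw]
  exact Nat.add_le_add_left (distToSet_le hw) _

theorem distToSet_induce {P : Set V} (hP : ∀ a b : P, (G.induce P).dist a b = G.dist a b)
    (u : P) (S : Set P) : distToSet (G.induce P) u S = distToSet G u (Subtype.val '' S) := by
  simp only [distToSet, Set.image_image, ← hP]

end DistToSet

/-- A locating coloring with colors in an arbitrary type: `IsLocatingColoring` is the case of
`Fin k`. Other color types keep apart the colors that different pieces of a graph contribute. -/
def IsLocating {V α : Type*} (G : SimpleGraph V) (c : V → α) : Prop :=
  (∀ u v : V, G.Adj u v → c u ≠ c v) ∧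
    ∀ u v : V, u ≠ v → ∃ a : α, distToSet G u (c ⁻¹' {a}) ≠ distToSet G v (c ⁻¹' {a})

namespace IsLocating

variable {V α β : Type*} {G : SimpleGraph V} {c : V → α}

theorem comp_injective (hc : IsLocating G c) {e : α → β} (he : e.Injective) :
    IsLocating G (e ∘ c) := by
  refine ⟨fun u v huv h => hc.1 u v huv (he h), fun u v huv => ?_⟩
  obtain ⟨a, ha⟩ := hc.2 u v huv
  have hclass : (e ∘ c) ⁻¹' {e a} = c ⁻¹' {a} := by
    ext w
    exact he.eq_iff
  exact ⟨e a, by rwa [hclass]⟩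

theorem exists_isLocatingColoring [Finite α] (hc : IsLocating G c) :
    ∃ c' : V → Fin (Nat.card α), IsLocatingColoring G c' :=
  ⟨_, hc.comp_injective (Finite.equivFin α).injective⟩

theorem locatingChromaticNumber_le [Finite α] (hc : IsLocating G c) :
    locatingChromaticNumber G ≤ Nat.card α :=
  Nat.sInf_le hc.exists_isLocatingColoring

theorem exists_fin_locatingChromaticNumber [Finite α] (hc : IsLocating G c) :
    ∃ c' : V → Fin (locatingChromaticNumber G), IsLocating G c' :=
  Nat.sInf_mem (⟨_, hc.exists_isLocatingColoring⟩ :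
    {k | ∃ c' : V → Fin k, IsLocatingColoring G c'}.Nonempty)

theorem exists_color_ne (hc : IsLocating G c) (hG : G.Connected) {a x y : V} (hx : G.Adj a x)
    (hy : G.Adj a y) (hxy : x ≠ y) : ∃ z, c z ≠ c a ∧ c z ≠ c x := by
  -- With two colors only, `x` and `y` would share one and both see the other at distance one.
  by_contra! htwo
  have hcy : c y = c x := htwo y (hc.1 a y hy).symm
  obtain ⟨i, hi⟩ := hc.2 x y hxy
  apply hi
  by_cases hia : i = c a
  · rw [distToSet_eq_one_of_adj hG hx.symm hia.symm fun h => hc.1 a x hx (hia ▸ h.symm),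
      distToSet_eq_one_of_adj hG hy.symm hia.symm fun h => hc.1 a y hy (hia ▸ h.symm)]
  by_cases hix : i = c x
  · have hxi : x ∈ c ⁻¹' {i} := hix.symm
    have hyi : y ∈ c ⁻¹' {i} := hcy.trans hix.symm
    rw [distToSet_eq_zero_of_mem hxi, distToSet_eq_zero_of_mem hyi]
  · have hempty : c ⁻¹' {i} = ∅ := Set.eq_empty_of_forall_notMem fun z hz =>
      hix (hz.symm.trans (htwo z fun h => hia (hz.symm.trans h)))
    rw [hempty, distToSet_empty, distToSet_empty]

end IsLocating

/-- A locating coloring whose colors are split into two *common* colors `inl false`, `inl true` and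
*private* colors `inr k`, such that the vertex `a` has the common color `q`, some neighbor of `a`
has the other common color, and some private color is used. Colorings of several pieces of a
graph can then be merged by identifying the common colors. -/
structure IsAnchored {V κ : Type*} (G : SimpleGraph V) (c : V → Bool ⊕ κ) (a : V) (q : Bool) :
    Prop where
  isLocating : IsLocating G c
  color_center : c a = .inl q
  exists_adj_color_eq : ∃ x, G.Adj a x ∧ c x = .inl !q
  exists_color_eq_inr : ∃ z k, c z = .inr k

theorem exists_equiv_bool_sum_fin {k : ℕ} {i j : Fin k} (hij : i ≠ j) (q : Bool) :
    ∃ e : Fin k ≃ Bool ⊕ Fin (k - 2), e i = .inl q ∧ e j = .inl !q := by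
  have hk : 2 ≤ k := by
    have := Finset.card_le_univ {i, j}
    rwa [Finset.card_pair hij, Fintype.card_fin] at this
  obtain ⟨e⟩ : Nonempty (Fin k ≃ Bool ⊕ Fin (k - 2)) :=
    Fintype.card_eq.1 (by simp only [Fintype.card_fin, Fintype.card_sum, Fintype.card_bool]; omega)
  have hq : (.inl q : Bool ⊕ Fin (k - 2)) ≠ .inl !q := by
    simp only [ne_eq, Sum.inl.injEq, Bool.eq_not_self, not_false_eq_true]
  obtain ⟨σ, hσ⟩ := MulAction.is_two_pretransitive_iff.1
    (Equiv.Perm.isMultiplyPretransitive (Bool ⊕ Fin (k - 2)) 2) (e.injective.ne hij) hq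
  exact ⟨e.trans σ, hσ⟩

theorem IsLocating.exists_isAnchored {V : Type*} {G : SimpleGraph V} {k : ℕ} {c : V → Fin k}
    (hc : IsLocating G c) (hG : G.Connected) {a x y : V} (hx : G.Adj a x) (hy : G.Adj a y)
    (hxy : x ≠ y) (q : Bool) : ∃ g : V → Bool ⊕ Fin (k - 2), IsAnchored G g a q := by
  obtain ⟨e, hea, hex⟩ := exists_equiv_bool_sum_fin (hc.1 a x hx) q
  obtain ⟨z, hza, hzx⟩ := hc.exists_color_ne hG hx hy hxy
  refine ⟨e ∘ c, hc.comp_injective e.injective, hea, ⟨x, hx, hex⟩, z, ?_⟩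
  rw [← e.injective.ne_iff, hea] at hza
  rw [← e.injective.ne_iff, hex] at hzx
  rcases hz : e (c z) with b | k
  · rcases Bool.eq_or_eq_not b q with rfl | rfl
    · exact absurd hz hza
    · exact absurd hz hzx
  · exact ⟨k, hz⟩

theorem IsAnchored.two_lt_of_fin {V : Type*} {G : SimpleGraph V} {k : ℕ}
    {g : V → Bool ⊕ Fin (k - 2)} {a : V} {q : Bool} (hg : IsAnchored G g a q) : 2 < k := by
  obtain ⟨-, j, -⟩ := hg.exists_color_eq_inr
  have := j.pos
  omega

theorem IsAnchored.exists_dist_le_one {V κ : Type*} {G : SimpleGraph V} {c : V → Bool ⊕ κ} {a : V}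
    {q : Bool} (hc : IsAnchored G c a q) (b : Bool) : ∃ x, G.dist a x ≤ 1 ∧ c x = .inl b := by
  rcases Bool.eq_or_eq_not b q with rfl | rfl
  · exact ⟨a, by simp only [dist_self, zero_le], hc.color_center⟩
  · obtain ⟨x, hx, hcx⟩ := hc.exists_adj_color_eq
    exact ⟨x, (dist_eq_one_iff_adj.2 hx).le, hcx⟩

theorem dist_add_dist_of_mem_support {V : Type*} {G : SimpleGraph V} {a b z : V} {p : G.Walk a b}
    (hp : p.length = G.dist a b) (hz : z ∈ p.support) :
    G.dist a z + G.dist z b = G.dist a b := by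
  classical
  rw [← length_eq_dist_of_subwalk hp (p.isSubwalk_takeUntil hz),
    ← length_eq_dist_of_subwalk hp (p.isSubwalk_dropUntil hz), ← Walk.length_append, p.take_spec hz,
    hp]

/-- `P` is attached to the rest of the graph at its vertex `a` only. This is expressed metrically:
every vertex outside `P` reaches the vertices of `P` through `a`. -/
structure IsPendant {V : Type*} (G : SimpleGraph V) (P : Set V) (a : V) : Prop where
  mem : a ∈ P
  dist_add_dist : ∀ u ∉ P, ∀ w ∈ P, G.dist u a + G.dist a w = G.dist u w

namespace IsPendant

variable {V : Type*} {G : SimpleGraph V} {P C : Set V} {a u w z : V}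

theorem mem_of_dist_add_dist (hP : IsPendant G P a) (hG : G.Connected) (hu : u ∈ P) (hw : w ∈ P)
    (hz : G.dist u z + G.dist z w = G.dist u w) : z ∈ P := by
  by_contra hzP
  have hpos : 0 < G.dist z a := hG.pos_dist_of_ne fun h => hzP (h ▸ hP.mem)
  have hzu := hP.dist_add_dist z hzP u hu
  have hzw := hP.dist_add_dist z hzP w hw
  have htri := hG.dist_triangle (u := u) (v := a) (w := w)
  rw [dist_comm (u := u) (v := z)] at hz
  rw [dist_comm (u := u) (v := a)] at htri
  omega

theorem eq_of_adj (hP : IsPendant G P a) (hG : G.Connected) (hu : u ∈ P) (hw : w ∉ P)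
    (huw : G.Adj u w) : u = a := by
  have hpos : 0 < G.dist w a := hG.pos_dist_of_ne fun h => hw (h ▸ hP.mem)
  have hwu := hP.dist_add_dist w hw u hu
  rw [dist_eq_one_iff_adj.2 huw.symm] at hwu
  exact (hG.dist_eq_zero_iff.1 (by omega)).symm

theorem exists_walk_induce (hP : IsPendant G P a) (hG : G.Connected) (u w : P) :
    ∃ p : (G.induce P).Walk u w, p.length = G.dist u w := by
  obtain ⟨p, hp⟩ := hG.exists_walk_length_eq_dist (u : V) w
  have hsupp : ∀ z ∈ p.support, z ∈ P := fun z hz =>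
    hP.mem_of_dist_add_dist hG u.2 w.2 (dist_add_dist_of_mem_support hp hz)
  have hlen : (p.induce P hsupp).length = p.length := by
    rw [← Walk.length_map (Embedding.induce P).toHom, Walk.map_induce]
    rfl
  exact ⟨p.induce P hsupp, hlen.trans hp⟩

theorem connected_induce (hP : IsPendant G P a) (hG : G.Connected) : (G.induce P).Connected :=
  have : Nonempty P := ⟨a, hP.mem⟩
  ⟨fun u w => (hP.exists_walk_induce hG u w).choose.reachable⟩

theorem dist_induce (hP : IsPendant G P a) (hG : G.Connected) (u w : P) :
    (G.induce P).dist u w = G.dist u w := by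
  obtain ⟨p, hp⟩ := hP.exists_walk_induce hG u w
  obtain ⟨q, hq⟩ := (hP.connected_induce hG).exists_walk_length_eq_dist u w
  apply le_antisymm
  · exact hp ▸ dist_le p
  · rw [← hq, ← Walk.length_map (Embedding.induce P).toHom]
    exact dist_le _

theorem distToSet_of_notMem (hP : IsPendant G P a) (hG : G.Connected) (hC : C ⊆ P)
    (hne : C.Nonempty) (hu : u ∉ P) : distToSet G u C = G.dist u a + distToSet G a C :=
  distToSet_eq_dist_add hG hne fun w hw => hP.dist_add_dist u hu w (hC hw)

end IsPendant

section Glue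

variable {V ι : Type*} {κ : ι → Type*} {G : SimpleGraph V} {P : ι → Set V} {a : ι → V} {i : ι}

open Classical in
/-- The coloring of the whole graph that merges colorings `g i` of the pieces `P i`: the common
colors `inl b` of all pieces are identified, the private colors of different pieces are kept apart,
and vertices outside all pieces get the common color prescribed by `p`. -/
noncomputable def glue (p : V → Bool) (g : ∀ i, P i → Bool ⊕ κ i) (w : V) : Bool ⊕ Σ i, κ i :=
  if h : ∃ i, w ∈ P i then Sum.map id (Sigma.mk h.choose) (g h.choose ⟨w, h.choose_spec⟩)
  else .inl (p w)

theorem sumMap_id_mk_injective (i : ι) :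
    (Sum.map id (Sigma.mk i) : Bool ⊕ κ i → Bool ⊕ Σ i, κ i).Injective :=
  Function.injective_id.sumMap sigma_mk_injective

theorem glue_of_mem {p : V → Bool} {g : ∀ i, P i → Bool ⊕ κ i}
    (hdisj : Pairwise (Function.onFun Disjoint P)) (w : P i) :
    glue p g w = Sum.map id (Sigma.mk i) (g i w) := by
  have hunique : ∀ j (hj : (w : V) ∈ P j),
      Sum.map id (Sigma.mk j) (g j ⟨w, hj⟩) = Sum.map id (Sigma.mk i) (g i w) := by
    intro j hj
    obtain rfl : j = i := by
      by_contra hne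
      exact (hdisj hne).notMem_of_mem_left hj w.2
    rfl
  rw [glue, dif_pos ⟨i, w.2⟩]
  exact hunique _ _

theorem glue_of_notMem {p : V → Bool} {g : ∀ i, P i → Bool ⊕ κ i} {w : V} (hw : ∀ i, w ∉ P i) :
    glue p g w = .inl (p w) := by
  rw [glue, dif_neg (not_exists.2 hw)]

theorem mem_of_glue_eq_inr {p : V → Bool} {g : ∀ i, P i → Bool ⊕ κ i}
    (hdisj : Pairwise (Function.onFun Disjoint P)) {w : V} {k : κ i}
    (hw : glue p g w = .inr ⟨i, k⟩) : w ∈ P i := by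
  by_cases h : ∃ j, w ∈ P j
  · obtain ⟨j, hj⟩ := h
    rw [glue_of_mem hdisj ⟨w, hj⟩] at hw
    rcases hc : g j ⟨w, hj⟩ with b | k' <;> rw [hc] at hw
    · exact absurd hw Sum.inl_ne_inr
    · obtain rfl : j = i := congrArg Sigma.fst (Sum.inr_injective hw)
      exact hj
  · rw [glue_of_notMem (not_exists.1 h)] at hw
    exact absurd hw Sum.inl_ne_inr

variable (hG : G.Connected) (hP : ∀ i, IsPendant G (P i) (a i))
  (hdisj : Pairwise (Function.onFun Disjoint P)) {p : G.Coloring Bool}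
  {g : ∀ i, P i → Bool ⊕ κ i}
  (hg : ∀ i, IsAnchored (G.induce (P i)) (g i) ⟨a i, (hP i).mem⟩ (p (a i)))

include hG hP hdisj hg

theorem distToSet_glue (u : P i) (c : Bool ⊕ κ i) :
    distToSet G u (glue p g ⁻¹' {Sum.map id (Sigma.mk i) c}) =
      distToSet (G.induce (P i)) u (g i ⁻¹' {c}) := by
  rw [distToSet_induce ((hP i).dist_induce hG)]
  refine (distToSet_eq_of_subset ?_ fun w hw => ?_).symm
  · rintro _ ⟨w, rfl, rfl⟩
    exact glue_of_mem hdisj w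
  by_cases hwi : w ∈ P i
  · refine ⟨w, ⟨⟨w, hwi⟩, sumMap_id_mk_injective i ?_, rfl⟩, le_rfl⟩
    rw [← glue_of_mem hdisj]
    exact hw
  rcases c with b | k
  · obtain ⟨x, hax, hx⟩ := (hg i).exists_dist_le_one b
    replace hax : G.dist (a i) x ≤ 1 := ((hP i).dist_induce hG _ _).symm.trans_le hax
    refine ⟨x, ⟨x, hx, rfl⟩, ?_⟩
    have htri := hG.dist_triangle (u := (u : V)) (v := a i) (w := x)
    have hthrough := (hP i).dist_add_dist w hwi u u.2
    have hpos : 0 < G.dist w (a i) := hG.pos_dist_of_ne fun h => hwi (h ▸ (hP i).mem)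
    rw [dist_comm (u := (u : V)) (v := a i)] at htri
    rw [dist_comm (u := (u : V)) (v := w)]
    omega
  · exact absurd (mem_of_glue_eq_inr hdisj hw) hwi

theorem glue_eq_inl_of_adj {u w : V} (huw : G.Adj u w) (h : ∀ i, u ∈ P i → w ∉ P i) :
    glue p g u = .inl (p u) := by
  by_cases hu : ∃ i, u ∈ P i
  · obtain ⟨i, hi⟩ := hu
    obtain rfl := (hP i).eq_of_adj hG hi (h i hi) huw
    rw [glue_of_mem hdisj ⟨a i, hi⟩, (hg i).color_center, Sum.map_inl, id]
  · exact glue_of_notMem (not_exists.1 hu)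

theorem glue_ne_of_adj {u w : V} (huw : G.Adj u w) : glue p g u ≠ glue p g w := by
  by_cases h : ∃ i, u ∈ P i ∧ w ∈ P i
  · obtain ⟨i, hu, hw⟩ := h
    rw [glue_of_mem hdisj ⟨u, hu⟩, glue_of_mem hdisj ⟨w, hw⟩, (sumMap_id_mk_injective i).ne_iff]
    exact (hg i).isLocating.1 ⟨u, hu⟩ ⟨w, hw⟩ huw
  · push Not at h
    rw [glue_eq_inl_of_adj hG hP hdisj hg huw h,
      glue_eq_inl_of_adj hG hP hdisj hg huw.symm fun i hw hu => h i hu hw, Sum.inl_injective.ne_iff]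
    exact p.valid huw

omit hG in
theorem exists_glue_preimage_subset (i : ι) :
    ∃ γ, (glue p g ⁻¹' {γ}).Nonempty ∧ glue p g ⁻¹' {γ} ⊆ P i := by
  obtain ⟨z, k, hz⟩ := (hg i).exists_color_eq_inr
  refine ⟨.inr ⟨i, k⟩, ⟨z, ?_⟩, fun w hw => mem_of_glue_eq_inr hdisj hw⟩
  rw [Set.mem_preimage, glue_of_mem hdisj, hz]
  rfl

theorem exists_glue_distToSet_eq_dist_add (i : ι) :
    ∃ γ r, (∀ u, distToSet G u (glue p g ⁻¹' {γ}) ≤ G.dist u (a i) + r) ∧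
      ∀ u ∉ P i, distToSet G u (glue p g ⁻¹' {γ}) = G.dist u (a i) + r := by
  obtain ⟨γ, hne, hsub⟩ := exists_glue_preimage_subset hP hdisj hg i
  exact ⟨γ, distToSet G (a i) (glue p g ⁻¹' {γ}), fun u => distToSet_le_dist_add hG hne,
    fun u hu => (hP i).distToSet_of_notMem hG hsub hne hu⟩

/-- By the private colors of `P i` and of `P j`, an unresolved pair would put `v` no farther than
`u` from `a i` and no nearer than `u` to `a j`, which `hbranch` rules out as `u` reaches `a j`
through `a i`. -/
theorem exists_glue_distToSet_ne_of_mem_of_notMem {u v : V} (hu : u ∈ P i) (hv : v ∉ P i)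
    (hbranch : ∃ j, G.dist v (a j) < G.dist v (a i) + G.dist (a i) (a j)) :
    ∃ γ, distToSet G u (glue p g ⁻¹' {γ}) ≠ distToSet G v (glue p g ⁻¹' {γ}) := by
  by_contra! heq
  obtain ⟨j, hj⟩ := hbranch
  have hij : i ≠ j := by
    rintro rfl
    simp only [dist_self, add_zero, lt_irrefl] at hj
  have huj : u ∉ P j := (hdisj hij).notMem_of_mem_left hu
  have haj : a j ∉ P i := (hdisj hij).notMem_of_mem_right (hP j).mem
  obtain ⟨γ, r, hle, hγ⟩ := exists_glue_distToSet_eq_dist_add hG hP hdisj hg i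
  obtain ⟨γ', r', hle', hγ'⟩ := exists_glue_distToSet_eq_dist_add hG hP hdisj hg j
  have hvi : G.dist v (a i) ≤ G.dist u (a i) := by
    have := hle u
    rw [heq, hγ v hv] at this
    omega
  have hvj : G.dist u (a j) ≤ G.dist v (a j) := by
    have := hle' v
    rw [← heq, hγ' u huj] at this
    omega
  have hthrough := (hP i).dist_add_dist _ haj u hu
  rw [dist_comm (u := a j) (v := u), dist_comm (u := a j) (v := a i),
    dist_comm (u := a i) (v := u)] at hthrough
  omega

/-- `hbranch` says that `a i` does not separate `v` from all the other attachment vertices, and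
`hresolve` that the attachment vertices resolve the vertices outside all pieces. -/
theorem isLocating_glue
    (hbranch : ∀ i, ∀ v ∉ P i, ∃ j, G.dist v (a j) < G.dist v (a i) + G.dist (a i) (a j))
    (hresolve : ∀ u v, (∀ i, u ∉ P i) → (∀ i, v ∉ P i) → u ≠ v →
      ∃ j, G.dist u (a j) ≠ G.dist v (a j)) :
    IsLocating G (glue p g) := by
  refine ⟨fun u v huv => glue_ne_of_adj hG hP hdisj hg huv, fun u v huv => ?_⟩
  by_cases hu : ∃ i, u ∈ P i
  · obtain ⟨i, hu⟩ := hu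
    by_cases hv : v ∈ P i
    · obtain ⟨c, hc⟩ := (hg i).isLocating.2 ⟨u, hu⟩ ⟨v, hv⟩ fun h => huv (congrArg Subtype.val h)
      refine ⟨Sum.map id (Sigma.mk i) c, ?_⟩
      rwa [← distToSet_glue hG hP hdisj hg, ← distToSet_glue hG hP hdisj hg] at hc
    · exact exists_glue_distToSet_ne_of_mem_of_notMem hG hP hdisj hg hu hv (hbranch i v hv)
  by_cases hv : ∃ i, v ∈ P i
  · obtain ⟨i, hv⟩ := hv
    have hui := not_exists.1 hu i
    exact (exists_glue_distToSet_ne_of_mem_of_notMem hG hP hdisj hg hv hui (hbranch i u hui)).imp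
      fun _ => Ne.symm
  obtain ⟨j, hj⟩ := hresolve u v (not_exists.1 hu) (not_exists.1 hv) huv
  obtain ⟨γ, r, -, hγ⟩ := exists_glue_distToSet_eq_dist_add hG hP hdisj hg j
  refine ⟨γ, ?_⟩
  rwa [hγ u (not_exists.1 hu j), hγ v (not_exists.1 hv j), (add_left_injective r).ne_iff]

end Glue

/-- `a` and `b` are joined by a walk that avoids `m`, that is, they lie in the same component of the
graph without `m`. -/
def JoinedAvoiding {V : Type*} (G : SimpleGraph V) (m a b : V) : Prop :=
  ∃ p : G.Walk a b, m ∉ p.support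

namespace JoinedAvoiding

variable {V : Type*} {G : SimpleGraph V} {m a b c : V}

theorem symm (h : JoinedAvoiding G m a b) : JoinedAvoiding G m b a := by
  obtain ⟨p, hp⟩ := h
  exact ⟨p.reverse, by rwa [Walk.support_reverse, List.mem_reverse]⟩

theorem trans (h₁ : JoinedAvoiding G m a b) (h₂ : JoinedAvoiding G m b c) :
    JoinedAvoiding G m a c := by
  obtain ⟨p, hp⟩ := h₁
  obtain ⟨q, hq⟩ := h₂
  exact ⟨p.append q, by rw [Walk.mem_support_append_iff]; exact not_or.2 ⟨hp, hq⟩⟩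

theorem refl (h : a ≠ m) : JoinedAvoiding G m a a :=
  ⟨Walk.nil, by rw [Walk.support_nil, List.mem_singleton]; exact h.symm⟩

theorem ne_left (h : JoinedAvoiding G m a b) : a ≠ m := by
  rintro rfl
  obtain ⟨p, hp⟩ := h
  exact hp p.start_mem_support

theorem ne_right (h : JoinedAvoiding G m a b) : b ≠ m := h.symm.ne_left

theorem of_mem_support {p : G.Walk a m} (hp : p.IsPath) (hb : b ∈ p.support) (hbm : b ≠ m) :
    JoinedAvoiding G m a b := by
  classical
  exact ⟨p.takeUntil b hb, Walk.endpoint_notMem_support_takeUntil hp hb hbm.symm⟩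

end JoinedAvoiding

theorem exists_adj_joinedAvoiding {V : Type*} {G : SimpleGraph V} (hG : G.Connected) {a m : V}
    (h : a ≠ m) : ∃ x, G.Adj m x ∧ JoinedAvoiding G m a x := by
  obtain ⟨p, hp, -⟩ := hG.exists_path_of_dist m a
  cases p with
  | nil => exact absurd rfl h
  | cons hadj q => exact ⟨_, hadj, JoinedAvoiding.symm ⟨q, ((Walk.cons_isPath_iff hadj q).1 hp).2⟩⟩

theorem three_le_degree_of_adj {V : Type*} {G : SimpleGraph V} {z a b c : V}
    [Fintype (G.neighborSet z)] (ha : G.Adj z a) (hb : G.Adj z b) (hc : G.Adj z c) (hab : a ≠ b)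
    (hac : a ≠ c) (hbc : b ≠ c) : 3 ≤ G.degree z := by
  simp only [← card_neighborFinset_eq_degree, Nat.succ_le_iff, Finset.two_lt_card,
    mem_neighborFinset]
  exact ⟨a, ha, b, hb, c, hc, hab, hac, hbc⟩

theorem exists_adj_adj_of_three_le_degree {V : Type*} {G : SimpleGraph V} {z : V}
    [Fintype (G.neighborSet z)] (h : 3 ≤ G.degree z) (a : V) :
    ∃ x y, G.Adj z x ∧ G.Adj z y ∧ x ≠ a ∧ y ≠ a ∧ x ≠ y := by
  classical
  have hcard : 1 < ((G.neighborFinset z).erase a).card := by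
    have := Finset.pred_card_le_card_erase (s := G.neighborFinset z) (a := a)
    rw [G.card_neighborFinset_eq_degree] at this
    omega
  obtain ⟨x, hx, y, hy, hxy⟩ := Finset.one_lt_card.1 hcard
  simp only [Finset.mem_erase, mem_neighborFinset] at hx hy
  exact ⟨x, y, hx.2, hy.2, hx.1, hy.1, hxy⟩

section Tree

variable {V : Type*} {T : SimpleGraph V} (hT : T.IsTree) {a b c m x y : V}

include hT

theorem joinedAvoiding_iff : JoinedAvoiding T m a b ↔ T.dist a m + T.dist m b ≠ T.dist a b := by
  classical
  constructor
  · rintro ⟨p, hp⟩ h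
    obtain ⟨q, hq⟩ := hT.connected.exists_walk_length_eq_dist a m
    obtain ⟨r, hr⟩ := hT.connected.exists_walk_length_eq_dist m b
    have hqr : (q.append r).IsPath :=
      Walk.isPath_of_length_eq_dist _ (by rw [Walk.length_append, hq, hr, h])
    have heq : q.append r = p.bypass := (hT.existsUnique_path a b).unique hqr p.bypass_isPath
    refine hp (p.support_bypass_subset_support ?_)
    rw [← heq, Walk.mem_support_append_iff]
    exact .inl q.end_mem_support
  · intro h
    obtain ⟨p, hp⟩ := hT.connected.exists_walk_length_eq_dist a b
    exact ⟨p, fun hm => h (dist_add_dist_of_mem_support hp hm)⟩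

theorem not_joinedAvoiding_iff :
    ¬ JoinedAvoiding T m a b ↔ T.dist a m + T.dist m b = T.dist a b := by
  rw [joinedAvoiding_iff hT, not_not]

theorem dist_add_one_eq_of_joinedAvoiding (hx : T.Adj m x) (h : JoinedAvoiding T m a x) :
    T.dist a x + 1 = T.dist a m := by
  rcases hT.dist_eq_dist_add_one_of_adj a hx with heq | heq
  · exact heq.symm
  · rw [joinedAvoiding_iff hT, dist_eq_one_iff_adj.2 hx] at h
    exact absurd heq.symm h

theorem eq_of_adj_of_joinedAvoiding (hx : T.Adj m x) (hy : T.Adj m y)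
    (h : JoinedAvoiding T m x y) : x = y := by
  have hdist := dist_add_one_eq_of_joinedAvoiding hT hy h
  rw [dist_comm (u := x) (v := m), dist_eq_one_iff_adj.2 hx, Nat.add_eq_right] at hdist
  exact hT.connected.dist_eq_zero_iff.1 hdist

theorem exists_dist_lt_of_joinedAvoiding (hab : ¬ JoinedAvoiding T m a b)
    (hac : JoinedAvoiding T m a c) : ∃ x, ¬ JoinedAvoiding T x a b ∧ T.dist c x < T.dist c m := by
  obtain ⟨x, hx, hax⟩ := exists_adj_joinedAvoiding hT.connected hac.ne_left
  refine ⟨x, ?_, ?_⟩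
  · rw [not_joinedAvoiding_iff hT] at hab ⊢
    have hdist := dist_add_one_eq_of_joinedAvoiding hT hx hax
    have htri := hT.connected.dist_triangle (u := a) (v := x) (w := b)
    have htri' := hT.connected.dist_triangle (u := x) (v := m) (w := b)
    rw [dist_eq_one_iff_adj.2 hx.symm] at htri'
    omega
  · have := dist_add_one_eq_of_joinedAvoiding hT hx (hac.symm.trans hax)
    omega

theorem exists_median [Finite V] (a b c : V) : ∃ m, ¬ JoinedAvoiding T m a b ∧
    ¬ JoinedAvoiding T m a c ∧ ¬ JoinedAvoiding T m b c := by
  obtain ⟨m, hm, hmin⟩ := Set.exists_min_image {m | ¬ JoinedAvoiding T m a b} (T.dist c)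
    (Set.toFinite _) ⟨a, fun h => h.ne_left rfl⟩
  refine ⟨m, hm, fun hac => ?_, fun hbc => ?_⟩
  · obtain ⟨x, hx, hlt⟩ := exists_dist_lt_of_joinedAvoiding hT hm hac
    exact (hmin x hx).not_gt hlt
  · obtain ⟨x, hx, hlt⟩ := exists_dist_lt_of_joinedAvoiding hT (fun h => hm h.symm) hbc
    exact (hmin x fun h => hx h.symm).not_gt hlt

theorem degree_eq_one_of_forall_dist_le [Fintype (T.neighborSet a)] (hab : a ≠ b)
    (hmax : ∀ y, T.Adj a y → T.dist b y ≤ T.dist b a) : T.degree a = 1 := by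
  obtain ⟨x, hax, hbx⟩ := exists_adj_joinedAvoiding hT.connected hab.symm
  refine degree_eq_one_iff_existsUnique_adj.2 ⟨x, hax, fun y hay => ?_⟩
  have hby : JoinedAvoiding T a b y := by
    rw [joinedAvoiding_iff hT, dist_eq_one_iff_adj.2 hay]
    have := hmax y hay
    omega
  exact eq_of_adj_of_joinedAvoiding hT hay hax (hby.symm.trans hbx)

theorem three_le_degree_of_not_joinedAvoiding [Fintype (T.neighborSet m)] (ha : a ≠ m)
    (hb : b ≠ m) (hc : c ≠ m) (hab : ¬ JoinedAvoiding T m a b)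
    (hac : ¬ JoinedAvoiding T m a c) (hbc : ¬ JoinedAvoiding T m b c) : 3 ≤ T.degree m := by
  obtain ⟨x, hx, hax⟩ := exists_adj_joinedAvoiding hT.connected ha
  obtain ⟨y, hy, hby⟩ := exists_adj_joinedAvoiding hT.connected hb
  obtain ⟨z, hz, hcz⟩ := exists_adj_joinedAvoiding hT.connected hc
  apply three_le_degree_of_adj hx hy hz
  · rintro rfl
    exact hab (hax.trans hby.symm)
  · rintro rfl
    exact hac (hax.trans hcz.symm)
  · rintro rfl
    exact hbc (hby.trans hcz.symm)

end Tree

theorem ncard_neighborSet_toSubgraph_of_mem_support {V : Type*} {G : SimpleGraph V} {u v x : V}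
    {p : G.Walk u v} (hp : p.IsPath) (hx : x ∈ p.support) (hxu : x ≠ u) (hxv : x ≠ v) :
    (p.toSubgraph.neighborSet x).ncard = 2 := by
  obtain ⟨i, rfl, hi⟩ := Walk.mem_support_iff_exists_getVert.1 hx
  exact hp.ncard_neighborSet_toSubgraph_internal_eq_two (fun h => hxu (h ▸ p.getVert_zero))
    (hi.lt_of_ne fun h => hxv (h ▸ p.getVert_length))

theorem ncard_neighborSet {V : Type*} (G : SimpleGraph V) (x : V) [Fintype (G.neighborSet x)] :
    (G.neighborSet x).ncard = G.degree x := by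
  rw [Set.ncard_eq_toFinset_card', Set.toFinset_card, card_neighborSet_eq_degree]

/-- The leaves whose end-path ends at the branch `v`. -/
def endLeaves {V : Type*} [Fintype V] (T : SimpleGraph V) [DecidableRel T.Adj] (v : V) : Set V :=
  {u | ∃ p : T.Walk u v, IsEndPath T p}

namespace IsEndPath

variable {V : Type*} [Fintype V] {T : SimpleGraph V} [DecidableRel T.Adj] {u v x y z : V}
  {p : T.Walk u v}

theorem of_isPath (hp : p.IsPath) (hu : T.degree u = 1) (hv : 3 ≤ T.degree v)
    (hdeg : ∀ z, JoinedAvoiding T v u z → T.degree z ≤ 2) : IsEndPath T p := by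
  refine ⟨hp, hu, hv, fun z hz hzu hzv => (hdeg z (.of_mem_support hp hz hzv)).antisymm ?_⟩
  rw [← ncard_neighborSet_toSubgraph_of_mem_support hp hz hzu hzv, ← ncard_neighborSet]
  exact Set.ncard_le_ncard (p.toSubgraph.neighborSet_subset z)

theorem neighborSet_toSubgraph (hp : IsEndPath T p) (hx : x ∈ p.support) (hxv : x ≠ v) :
    p.toSubgraph.neighborSet x = T.neighborSet x := by
  obtain ⟨hpath, hu, -, hinner⟩ := hp
  refine Set.eq_of_subset_of_ncard_le (p.toSubgraph.neighborSet_subset x) ?_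
  rw [ncard_neighborSet]
  by_cases hxu : x = u
  · subst hxu
    rw [hu, hpath.neighborSet_toSubgraph_startpoint (Walk.not_nil_of_ne hxv), Set.ncard_singleton]
  · rw [hinner x hx hxu hxv, ncard_neighborSet_toSubgraph_of_mem_support hpath hx hxu hxv]

theorem mem_support_of_adj (hp : IsEndPath T p) (hx : x ∈ p.support) (hxv : x ≠ v)
    (hxy : T.Adj x y) : y ∈ p.support := by
  have hy : y ∈ p.toSubgraph.neighborSet x := hp.neighborSet_toSubgraph hx hxv ▸ hxy
  exact p.mem_verts_toSubgraph.1 (Subgraph.Adj.snd_mem hy)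

theorem mem_support_of_joinedAvoiding (hp : IsEndPath T p) (hx : x ∈ p.support)
    (h : JoinedAvoiding T v x z) : z ∈ p.support := by
  obtain ⟨q, hq⟩ := h
  induction q with
  | nil => exact hx
  | cons hadj q ih =>
    rw [Walk.support_cons, List.mem_cons, not_or] at hq
    exact ih (hp.mem_support_of_adj hx (Ne.symm hq.1) hadj) hq.2

end IsEndPath

section EndLeaves

variable {V : Type*} [Fintype V] {T : SimpleGraph V} [DecidableRel T.Adj] {m u u' v w z : V}

theorem degree_eq_one_of_mem_endLeaves (hu : u ∈ endLeaves T v) : T.degree u = 1 :=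
  hu.choose_spec.2.1

theorem three_le_degree_of_mem_endLeaves (hu : u ∈ endLeaves T v) : 3 ≤ T.degree v :=
  hu.choose_spec.2.2.1

theorem ne_of_mem_endLeaves (hu : u ∈ endLeaves T v) : u ≠ v := by
  rintro rfl
  have h₁ := degree_eq_one_of_mem_endLeaves hu
  have h₃ := three_le_degree_of_mem_endLeaves hu
  omega

theorem degree_eq_two_of_joinedAvoiding (hu : u ∈ endLeaves T v) (h : JoinedAvoiding T v u z)
    (hzu : z ≠ u) : T.degree z = 2 := by
  obtain ⟨p, hp⟩ := hu
  exact hp.2.2.2 z (hp.mem_support_of_joinedAvoiding p.start_mem_support h) hzu h.ne_right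

theorem degree_le_two_of_joinedAvoiding (hu : u ∈ endLeaves T v) (h : JoinedAvoiding T v u z) :
    T.degree z ≤ 2 := by
  by_cases hzu : z = u
  · rw [hzu, degree_eq_one_of_mem_endLeaves hu]
    exact one_le_two
  · exact (degree_eq_two_of_joinedAvoiding hu h hzu).le

theorem eq_of_mem_endLeaves_of_joinedAvoiding (hu : u ∈ endLeaves T v) (hu' : u' ∈ endLeaves T v)
    (h : JoinedAvoiding T v u u') : u = u' := by
  by_contra hne
  have h₁ := degree_eq_one_of_mem_endLeaves hu'
  have h₂ := degree_eq_two_of_joinedAvoiding hu h (Ne.symm hne)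
  omega

theorem isEndBranch_iff_nontrivial_endLeaves : IsEndBranch T v ↔ (endLeaves T v).Nontrivial :=
  ⟨fun ⟨u₁, u₂, p₁, p₂, hne, h₁, h₂⟩ => ⟨u₁, ⟨p₁, h₁⟩, u₂, ⟨p₂, h₂⟩, hne⟩,
    fun ⟨u₁, ⟨p₁, h₁⟩, u₂, ⟨p₂, h₂⟩, hne⟩ => ⟨u₁, u₂, p₁, p₂, hne, h₁, h₂⟩⟩

theorem IsEndBranch.three_le_degree (hv : IsEndBranch T v) : 3 ≤ T.degree v := by
  obtain ⟨u, hu⟩ := (isEndBranch_iff_nontrivial_endLeaves.1 hv).nonempty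
  exact three_le_degree_of_mem_endLeaves hu

theorem mem_endPalm_iff :
    w ∈ endPalm T v ↔ w = v ∨ ∃ u ∈ endLeaves T v, JoinedAvoiding T v u w := by
  constructor
  · rintro (hw | ⟨u, p, hp, hw⟩)
    · exact .inl hw
    · exact or_iff_not_imp_left.2 fun hwv => ⟨u, ⟨p, hp⟩, JoinedAvoiding.of_mem_support hp.1 hw hwv⟩
  · rintro (hw | ⟨u, ⟨p, hp⟩, h⟩)
    · exact .inl hw
    · exact .inr ⟨u, p, hp, hp.mem_support_of_joinedAvoiding p.start_mem_support h⟩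

theorem endLeaves_subset_endPalm (v : V) : endLeaves T v ⊆ endPalm T v :=
  fun u ⟨p, hp⟩ => .inr ⟨u, p, hp, p.start_mem_support⟩

variable (hT : T.IsTree)

include hT

theorem isPendant_endPalm (v : V) : IsPendant T (endPalm T v) v := by
  refine ⟨.inl rfl, fun u hu w hw => (not_joinedAvoiding_iff hT).1 fun huw => hu ?_⟩
  rcases mem_endPalm_iff.1 hw with rfl | ⟨x, hx, hxw⟩
  · exact absurd rfl huw.ne_right
  · exact mem_endPalm_iff.2 (.inr ⟨x, hx, hxw.trans huw.symm⟩)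

theorem disjoint_endPalm (hu : 3 ≤ T.degree u) (hv : 3 ≤ T.degree v) (huv : u ≠ v) :
    Disjoint (endPalm T u) (endPalm T v) := by
  have hnotMem : ∀ {x y : V}, 3 ≤ T.degree y → x ≠ y → y ∉ endPalm T x := by
    intro x y hy hxy h
    rcases mem_endPalm_iff.1 h with rfl | ⟨z, hz, hzy⟩
    · exact hxy rfl
    · have := degree_le_two_of_joinedAvoiding hz hzy
      omega
  refine Set.disjoint_left.2 fun w hwu hwv => ?_
  have hvu := (isPendant_endPalm hT u).dist_add_dist v (hnotMem hv huv) w hwu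
  have huv' := (isPendant_endPalm hT v).dist_add_dist u (hnotMem hu huv.symm) w hwv
  have := hT.connected.pos_dist_of_ne huv
  rw [dist_comm (u := v) (v := u)] at hvu
  omega

theorem eq_of_joinedAvoiding_of_dist_eq (hu : u ∈ endLeaves T v) (hw : JoinedAvoiding T v u w)
    (hz : JoinedAvoiding T v u z) (hdist : T.dist w v = T.dist z v) : w = z := by
  classical
  obtain ⟨p, hp⟩ := hu
  obtain ⟨q, hqpath, hq⟩ := hT.connected.exists_path_of_dist u v
  obtain rfl := (hT.existsUnique_path u v).unique hp.1 hqpath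
  have hindex : ∀ {x}, JoinedAvoiding T v u x → p.getVert (T.dist u v - T.dist x v) = x := by
    intro x h
    have hx := hp.mem_support_of_joinedAvoiding p.start_mem_support h
    rw [← dist_add_dist_of_mem_support hq hx, Nat.add_sub_cancel,
      ← length_eq_dist_of_subwalk hq (p.isSubwalk_takeUntil hx), Walk.getVert_length_takeUntil]
  rw [← hindex hw, ← hindex hz, hdist]

theorem exists_mem_endLeaves_of_forall_degree_le_two (hv : 3 ≤ T.degree v) (hwv : w ≠ v)
    (hdeg : ∀ z, JoinedAvoiding T v w z → T.degree z ≤ 2) :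
    ∃ u ∈ endLeaves T v, JoinedAvoiding T v w u := by
  obtain ⟨u, hwu, hmax⟩ := Set.exists_max_image {z | JoinedAvoiding T v w z} (T.dist v)
    (Set.toFinite _) ⟨w, .refl hwv⟩
  have hleaf : T.degree u = 1 := by
    refine degree_eq_one_of_forall_dist_le hT hwu.ne_right fun y huy => ?_
    by_contra! hlt
    have huy' : JoinedAvoiding T v u y := by
      rw [joinedAvoiding_iff hT, dist_eq_one_iff_adj.2 huy]
      have := hT.connected.pos_dist_of_ne hwu.ne_right
      omega
    exact (hmax y (hwu.trans huy')).not_gt hlt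
  obtain ⟨p, hp, -⟩ := hT.connected.exists_path_of_dist u v
  exact ⟨u, ⟨p, IsEndPath.of_isPath hp hleaf hv fun z hz => hdeg z (hwu.trans hz)⟩, hwu⟩

theorem isEndBranch_of_forall_joinedAvoiding (hz : 3 ≤ T.degree z) (hzw : w ≠ z)
    (hbranch : ∀ y, y ≠ z → 3 ≤ T.degree y → JoinedAvoiding T z w y) : IsEndBranch T z := by
  obtain ⟨m, hm, hwm⟩ := exists_adj_joinedAvoiding hT.connected hzw
  have hleg : ∀ x, T.Adj z x → x ≠ m → ∃ u ∈ endLeaves T z, JoinedAvoiding T z x u := by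
    intro x hx hxm
    refine exists_mem_endLeaves_of_forall_degree_le_two hT hz hx.ne' fun y hxy => ?_
    by_contra! hy
    have hwy := hbranch y hxy.ne_right hy
    exact hxm (eq_of_adj_of_joinedAvoiding hT hx hm (hxy.trans (hwy.symm.trans hwm)))
  obtain ⟨x, y, hx, hy, hxm, hym, hxy⟩ := exists_adj_adj_of_three_le_degree hz m
  obtain ⟨u, hu, hxu⟩ := hleg x hx hxm
  obtain ⟨u', hu', hyu'⟩ := hleg y hy hym
  refine isEndBranch_iff_nontrivial_endLeaves.2 ⟨u, hu, u', hu', ?_⟩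
  rintro rfl
  exact hxy (eq_of_adj_of_joinedAvoiding hT hx hy (hxu.trans hyu'.symm))

theorem degree_le_two_of_forall_not_isEndBranch
    (h : ∀ z, JoinedAvoiding T m w z → ¬ IsEndBranch T z) (hz : JoinedAvoiding T m w z) :
    T.degree z ≤ 2 := by
  by_contra! hz3
  obtain ⟨b, ⟨hwb, hb⟩, hmax⟩ := Set.exists_max_image
    {y | JoinedAvoiding T m w y ∧ 3 ≤ T.degree y} (T.dist m) (Set.toFinite _) ⟨z, hz, hz3⟩
  refine h b hwb (isEndBranch_of_forall_joinedAvoiding hT hb hwb.ne_right.symm fun y hyb hy => ?_)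
  rw [joinedAvoiding_iff hT]
  intro hbetween
  have hby := hT.connected.pos_dist_of_ne hyb.symm
  have hmb := hT.connected.pos_dist_of_ne hwb.ne_right.symm
  have hwy : ¬ JoinedAvoiding T m b y := fun hwy => by
    have := hmax y ⟨hwb.trans hwy, hy⟩
    omega
  rw [not_joinedAvoiding_iff hT, dist_comm (u := b) (v := m)] at hwy
  omega

theorem exists_mem_endLeaves_of_forall_not_isEndBranch (hm : 3 ≤ T.degree m) (hwm : w ≠ m)
    (h : ∀ z, JoinedAvoiding T m w z → ¬ IsEndBranch T z) :
    ∃ u ∈ endLeaves T m, JoinedAvoiding T m w u :=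
  exists_mem_endLeaves_of_forall_degree_le_two hT hm hwm fun _ =>
    degree_le_two_of_forall_not_isEndBranch hT h

theorem exists_isEndBranch_joinedAvoiding (hv : 3 ≤ T.degree v) (hw : w ∉ endPalm T v) :
    ∃ z, IsEndBranch T z ∧ JoinedAvoiding T v w z := by
  by_contra! h
  obtain ⟨u, hu, hwu⟩ := exists_mem_endLeaves_of_forall_not_isEndBranch hT hv
    (fun hwv => hw (.inl hwv)) fun z hwz hz => h z hz hwz
  exact hw (mem_endPalm_iff.2 (.inr ⟨u, hu, hwu.symm⟩))

theorem not_joinedAvoiding_of_forall_dist_eq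
    (hdist : ∀ z, IsEndBranch T z → T.dist u z = T.dist v z)
    (huv : ¬ JoinedAvoiding T m u v) (hm : T.dist u m = T.dist v m) (hz : IsEndBranch T z) :
    ¬ JoinedAvoiding T m u z := by
  intro huz
  have hvz : ¬ JoinedAvoiding T m v z := fun hvz => huv (huz.trans hvz.symm)
  rw [not_joinedAvoiding_iff hT, ← hm, ← hdist z hz] at hvz
  exact (joinedAvoiding_iff hT).1 huz hvz

/-- The two vertices hang off the branch `m` at which their paths to some end-branch meet: no
end-branch lies on their sides of `m`, so both sides are legs and `m` is itself an end-branch. -/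
theorem exists_mem_endPalm_of_forall_dist_eq (hbranch : ∃ z, IsEndBranch T z) (huv : u ≠ v)
    (hdist : ∀ z, IsEndBranch T z → T.dist u z = T.dist v z) :
    ∃ m, IsEndBranch T m ∧ u ∈ endPalm T m := by
  obtain ⟨e, he⟩ := hbranch
  obtain ⟨m, huv', hue, hve⟩ := exists_median hT u v e
  have hm : T.dist u m = T.dist v m := by
    have hu := (not_joinedAvoiding_iff hT).1 hue
    have hv := (not_joinedAvoiding_iff hT).1 hve
    have := hdist e he
    omega
  have hne : u ≠ m ∧ v ≠ m := by
    have hiff : u = m ↔ v = m := by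
      rw [← hT.connected.dist_eq_zero_iff, hm, hT.connected.dist_eq_zero_iff]
    exact ⟨fun h => huv (h.trans (hiff.1 h).symm), fun h => huv ((hiff.2 h).trans h.symm)⟩
  have hdeg : 3 ≤ T.degree m := by
    by_cases hem : e = m
    · exact hem ▸ he.three_le_degree
    · exact three_le_degree_of_not_joinedAvoiding hT hne.1 hne.2 hem huv' hue hve
  obtain ⟨x, hx, hux⟩ := exists_mem_endLeaves_of_forall_not_isEndBranch hT hdeg hne.1
    fun z huz hz => not_joinedAvoiding_of_forall_dist_eq hT hdist huv' hm hz huz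
  obtain ⟨y, hy, hvy⟩ := exists_mem_endLeaves_of_forall_not_isEndBranch hT hdeg hne.2
    fun z hvz hz => not_joinedAvoiding_of_forall_dist_eq hT (fun z hz => (hdist z hz).symm)
      (fun h => huv' h.symm) hm.symm hz hvz
  refine ⟨m, isEndBranch_iff_nontrivial_endLeaves.2 ⟨x, hx, y, hy, ?_⟩,
    mem_endPalm_iff.2 (.inr ⟨x, hx, hux.symm⟩)⟩
  rintro rfl
  exact huv' (hux.trans hvy.symm)

end EndLeaves

section LegColor

variable {V : Type*} [Fintype V] {T : SimpleGraph V} [DecidableRel T.Adj] {u v w : V}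

open Classical in
/-- The coloring of the end-palm of `v` that gives to the vertices at odd distance from `v` the
end-path they lie on (named by its leaf) as color, and to all other vertices the color `none`. -/
noncomputable def legColor (T : SimpleGraph V) [DecidableRel T.Adj] (v w : V) :
    Option (endLeaves T v) :=
  if h : Odd (T.dist v w) ∧ ∃ u : endLeaves T v, JoinedAvoiding T v u w then some h.2.choose
  else none

theorem legColor_eq_some_iff {u : endLeaves T v} :
    legColor T v w = some u ↔ Odd (T.dist v w) ∧ JoinedAvoiding T v u w := by
  by_cases h : Odd (T.dist v w) ∧ ∃ u : endLeaves T v, JoinedAvoiding T v u w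
  · have hleaf := h.2.choose_spec
    rw [legColor, dif_pos h, Option.some_inj, and_iff_right h.1]
    refine ⟨fun heq => heq ▸ hleaf, fun hu => Subtype.ext ?_⟩
    exact eq_of_mem_endLeaves_of_joinedAvoiding (Subtype.prop _) u.2 (hleaf.trans hu.symm)
  · rw [legColor, dif_neg h]
    exact iff_of_false (Option.some_ne_none u).symm fun hu => h ⟨hu.1, u, hu.2⟩

theorem preimage_legColor_some_subset (u : endLeaves T v) :
    legColor T v ⁻¹' {some u} ⊆ endPalm T v := fun _ hw =>
  mem_endPalm_iff.2 (.inr ⟨u, u.2, (legColor_eq_some_iff.1 hw).2⟩)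

theorem odd_dist_iff_legColor_ne_none (hw : w ∈ endPalm T v) :
    Odd (T.dist v w) ↔ legColor T v w ≠ none := by
  rw [Option.ne_none_iff_exists']
  constructor
  · intro hodd
    rcases mem_endPalm_iff.1 hw with rfl | ⟨u, hu, huw⟩
    · rw [dist_self] at hodd
      exact absurd hodd Nat.not_odd_zero
    · exact ⟨⟨u, hu⟩, legColor_eq_some_iff.2 ⟨hodd, huw⟩⟩
  · rintro ⟨u, hu⟩
    exact (legColor_eq_some_iff.1 hu).1

variable (hT : T.IsTree)

include hT

theorem distToSet_legColor_of_not_joinedAvoiding (u : endLeaves T v)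
    (huw : ¬ JoinedAvoiding T v u w) :
    distToSet T w (legColor T v ⁻¹' {some u}) = T.dist w v + 1 := by
  obtain ⟨x, hx, hux⟩ := exists_adj_joinedAvoiding hT.connected (ne_of_mem_endLeaves u.2)
  have hthrough : ∀ {y}, JoinedAvoiding T v u y → T.dist w v + T.dist v y = T.dist w y :=
    fun huy => (not_joinedAvoiding_iff hT).1 fun hwy => huw (huy.trans hwy.symm)
  have hvx : T.dist v x = 1 := dist_eq_one_iff_adj.2 hx
  have hxclass : x ∈ legColor T v ⁻¹' {some u} :=
    legColor_eq_some_iff.2 ⟨hvx ▸ odd_one, hux⟩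
  rw [distToSet_eq_dist hxclass, ← hthrough hux, hvx]
  intro y hy
  obtain ⟨hodd, huy⟩ := legColor_eq_some_iff.1 hy
  rw [← hthrough hux, ← hthrough huy, hvx]
  exact Nat.add_le_add_left hodd.pos _

theorem distToSet_legColor_le_one_of_joinedAvoiding (u : endLeaves T v)
    (huw : JoinedAvoiding T v u w) : distToSet T w (legColor T v ⁻¹' {some u}) ≤ 1 := by
  rcases Nat.even_or_odd (T.dist v w) with heven | hodd
  · obtain ⟨x, hwx, hvx⟩ := exists_adj_joinedAvoiding hT.connected huw.ne_right.symm
    have hdist := dist_add_one_eq_of_joinedAvoiding hT hwx hvx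
    have hoddx : Odd (T.dist v x) := by
      rw [← hdist, Nat.even_add_one, Nat.not_even_iff_odd] at heven
      exact heven
    have hwx' : JoinedAvoiding T v w x := by
      rw [joinedAvoiding_iff hT, dist_comm (u := w), dist_eq_one_iff_adj.2 hwx]
      have := hoddx.pos
      omega
    have hx : x ∈ legColor T v ⁻¹' {some u} :=
      legColor_eq_some_iff.2 ⟨hoddx, huw.trans hwx'⟩
    exact (distToSet_le hx).trans_eq (dist_eq_one_iff_adj.2 hwx)
  · have hw : w ∈ legColor T v ⁻¹' {some u} := legColor_eq_some_iff.2 ⟨hodd, huw⟩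
    exact (distToSet_eq_zero_of_mem hw).trans_le zero_le_one

theorem legColor_ne_of_adj (hu : u ∈ endPalm T v) (hw : w ∈ endPalm T v) (huw : T.Adj u w) :
    legColor T v u ≠ legColor T v w := by
  intro heq
  have hiff : Odd (T.dist v u) ↔ Odd (T.dist v w) := by
    rw [odd_dist_iff_legColor_ne_none hu, odd_dist_iff_legColor_ne_none hw, heq]
  rcases hT.dist_eq_dist_add_one_of_adj v huw with h | h <;>
    rw [h, Nat.odd_add_one] at hiff
  · exact not_iff_self hiff
  · exact not_iff_self hiff.symm

theorem joinedAvoiding_of_distToSet_legColor_eq (hv : IsEndBranch T v) (huw : u ≠ w)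
    (heq : ∀ x : endLeaves T v, distToSet T u (legColor T v ⁻¹' {some x}) =
      distToSet T w (legColor T v ⁻¹' {some x}))
    {x : endLeaves T v} (hx : JoinedAvoiding T v x u) : JoinedAvoiding T v x w := by
  by_contra hxw
  obtain rfl : w = v := by
    have h₁ := distToSet_legColor_le_one_of_joinedAvoiding hT x hx
    rw [heq x, distToSet_legColor_of_not_joinedAvoiding hT x hxw] at h₁
    exact hT.connected.dist_eq_zero_iff.1 (by omega)
  obtain ⟨y, hy, hyx⟩ := (isEndBranch_iff_nontrivial_endLeaves.1 hv).exists_ne (x : V)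
  have hyu : ¬ JoinedAvoiding T w y u := fun hyu =>
    hyx (eq_of_mem_endLeaves_of_joinedAvoiding hy x.2 (hyu.trans hx.symm))
  have hyw : ¬ JoinedAvoiding T w y w := fun h => h.ne_right rfl
  have := heq ⟨y, hy⟩
  rw [distToSet_legColor_of_not_joinedAvoiding hT ⟨y, hy⟩ hyu,
    distToSet_legColor_of_not_joinedAvoiding hT ⟨y, hy⟩ hyw, dist_self, Nat.add_right_cancel_iff,
    hT.connected.dist_eq_zero_iff] at this
  exact huw this

theorem exists_distToSet_legColor_ne (hv : IsEndBranch T v) (hu : u ∈ endPalm T v)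
    (hw : w ∈ endPalm T v) (huw : u ≠ w) :
    ∃ x : endLeaves T v, distToSet T u (legColor T v ⁻¹' {some x}) ≠
      distToSet T w (legColor T v ⁻¹' {some x}) := by
  by_contra! heq
  have hiff : ∀ x : endLeaves T v, JoinedAvoiding T v x u ↔ JoinedAvoiding T v x w := fun x =>
    ⟨joinedAvoiding_of_distToSet_legColor_eq hT hv huw heq,
      joinedAvoiding_of_distToSet_legColor_eq hT hv huw.symm fun x => (heq x).symm⟩
  have hdist : ∀ x : endLeaves T v, ¬ JoinedAvoiding T v x u → T.dist u v = T.dist w v := by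
    intro x hx
    have := heq x
    rwa [distToSet_legColor_of_not_joinedAvoiding hT x hx,
      distToSet_legColor_of_not_joinedAvoiding hT x (mt (hiff x).2 hx),
      Nat.add_right_cancel_iff] at this
  have hends := isEndBranch_iff_nontrivial_endLeaves.1 hv
  rcases mem_endPalm_iff.1 hu with rfl | ⟨x, hx, hxu⟩
  · obtain ⟨y, hy⟩ := hends.nonempty
    have := hdist ⟨y, hy⟩ fun h => h.ne_right rfl
    rw [dist_self, eq_comm, hT.connected.dist_eq_zero_iff] at this
    exact huw this.symm
  · obtain ⟨y, hy, hyx⟩ := hends.exists_ne x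
    have hyu : ¬ JoinedAvoiding T v y u := fun hyu =>
      hyx (eq_of_mem_endLeaves_of_joinedAvoiding hy hx (hyu.trans hxu.symm))
    exact huw (eq_of_joinedAvoiding_of_dist_eq hT hx hxu ((hiff ⟨x, hx⟩).1 hxu) (hdist ⟨y, hy⟩ hyu))

theorem isLocating_legColor (hv : IsEndBranch T v) :
    IsLocating (T.induce (endPalm T v)) (fun w => legColor T v w) := by
  refine ⟨fun u w => legColor_ne_of_adj hT u.2 w.2, fun u w huw => ?_⟩
  obtain ⟨x, hx⟩ := exists_distToSet_legColor_ne hT hv u.2 w.2 (Subtype.coe_injective.ne huw)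
  have hclass : Subtype.val '' ((fun w : endPalm T v => legColor T v w) ⁻¹' {some x}) =
      legColor T v ⁻¹' {some x} := by
    rw [← Set.inter_eq_right.2 (preimage_legColor_some_subset x)]
    exact Subtype.image_preimage_coe _ (legColor T v ⁻¹' {some x})
  have hdist := (isPendant_endPalm hT v).dist_induce hT.connected
  exact ⟨some x, by rwa [distToSet_induce hdist, distToSet_induce hdist, hclass]⟩

theorem locatingChromaticNumber_induce_endPalm_le (hv : IsEndBranch T v) :
    locatingChromaticNumber (T.induce (endPalm T v)) ≤ (endLeaves T v).ncard + 1 := by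
  rw [← Nat.card_coe_set_eq, ← Finite.card_option]
  exact (isLocating_legColor hT hv).locatingChromaticNumber_le

theorem exists_isAnchored_endPalm (hv : IsEndBranch T v) (q : Bool) :
    ∃ g : endPalm T v → Bool ⊕ Fin (locatingChromaticNumber (T.induce (endPalm T v)) - 2),
      IsAnchored (T.induce (endPalm T v)) g ⟨v, (isPendant_endPalm hT v).mem⟩ q := by
  obtain ⟨c, hc⟩ := (isLocating_legColor hT hv).exists_fin_locatingChromaticNumber
  obtain ⟨u, hu, u', hu', hne⟩ := isEndBranch_iff_nontrivial_endLeaves.1 hv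
  obtain ⟨x, hx, hux⟩ := exists_adj_joinedAvoiding hT.connected (ne_of_mem_endLeaves hu)
  obtain ⟨y, hy, huy⟩ := exists_adj_joinedAvoiding hT.connected (ne_of_mem_endLeaves hu')
  have hvx : (T.induce (endPalm T v)).Adj ⟨v, (isPendant_endPalm hT v).mem⟩
      ⟨x, mem_endPalm_iff.2 (.inr ⟨u, hu, hux⟩)⟩ := hx
  have hvy : (T.induce (endPalm T v)).Adj ⟨v, (isPendant_endPalm hT v).mem⟩
      ⟨y, mem_endPalm_iff.2 (.inr ⟨u', hu', huy⟩)⟩ := hy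
  refine hc.exists_isAnchored ((isPendant_endPalm hT v).connected_induce hT.connected) hvx hvy
    (fun hxy => hne ?_) q
  obtain rfl : x = y := congrArg Subtype.val hxy
  exact eq_of_mem_endLeaves_of_joinedAvoiding hu hu' (hux.trans huy.symm)

theorem two_lt_locatingChromaticNumber_induce_endPalm (hv : IsEndBranch T v) :
    2 < locatingChromaticNumber (T.induce (endPalm T v)) := by
  obtain ⟨g, hg⟩ := exists_isAnchored_endPalm hT hv true
  exact hg.two_lt_of_fin

end LegColor

section GluedPalms

variable {V : Type*} [Fintype V] {T : SimpleGraph V} [DecidableRel T.Adj] (hT : T.IsTree)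

include hT

theorem exists_isLocating_of_exists_isEndBranch (hbranch : ∃ v, IsEndBranch T v) :
    ∃ c : V → Bool ⊕ Σ v : {v // IsEndBranch T v},
      Fin (locatingChromaticNumber (T.induce (endPalm T v)) - 2), IsLocating T c := by
  have p : T.Coloring Bool := hT.colorable_two.toColoring Fintype.card_bool.ge
  choose g hg using fun v : {v // IsEndBranch T v} => exists_isAnchored_endPalm hT v.2 (p v)
  have hdisj : Pairwise (Function.onFun Disjoint fun v : {v // IsEndBranch T v} => endPalm T v) :=
    fun u v huv => disjoint_endPalm hT u.2.three_le_degree v.2.three_le_degree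
      (Subtype.coe_injective.ne huv)
  have hpendant (v : {v // IsEndBranch T v}) : IsPendant T (endPalm T v) v :=
    isPendant_endPalm hT v
  refine ⟨glue p g, isLocating_glue hT.connected hpendant hdisj hg
    (fun v w hw => ?_) fun u w hu _ huw => ?_⟩
  · obtain ⟨z, hz, hwz⟩ := exists_isEndBranch_joinedAvoiding hT v.2.three_le_degree hw
    have htri := hT.connected.dist_triangle (u := w) (v := v) (w := z)
    exact ⟨⟨z, hz⟩, htri.lt_of_ne ((joinedAvoiding_iff hT).1 hwz).symm⟩
  · by_contra! hdist
    obtain ⟨m, hm, hum⟩ :=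
      exists_mem_endPalm_of_forall_dist_eq hT hbranch huw fun z hz => hdist ⟨z, hz⟩
    exact hu ⟨m, hm⟩ hum

theorem locatingChromaticNumber_add_two_mul_card_le [DecidablePred (IsEndBranch T)]
    (hbranch : ∃ v, IsEndBranch T v) :
    locatingChromaticNumber T + 2 * Finset.card {v | IsEndBranch T v} ≤
      2 + ∑ v with IsEndBranch T v, locatingChromaticNumber (T.induce (endPalm T v)) := by
  obtain ⟨c, hc⟩ := exists_isLocating_of_exists_isEndBranch hT hbranch
  have hle := hc.locatingChromaticNumber_le
  rw [Nat.card_eq_fintype_card, Fintype.card_sum, Fintype.card_bool, Fintype.card_sigma] at hle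
  simp only [Fintype.card_fin] at hle
  have hpalm : ∀ v ∈ ({v | IsEndBranch T v} : Finset V),
      locatingChromaticNumber (T.induce (endPalm T v)) - 2 + 2 =
        locatingChromaticNumber (T.induce (endPalm T v)) := fun v hv =>
    Nat.sub_add_cancel
      (two_lt_locatingChromaticNumber_induce_endPalm hT ((Finset.mem_filter_univ v).1 hv)).le
  rw [← Finset.sum_congr rfl hpalm, Finset.sum_add_distrib, Finset.sum_const, smul_eq_mul,
    Finset.sum_subtype (p := fun v => IsEndBranch T v) _ Finset.mem_filter_univ]
  omega

end GluedPalms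

section LeafCount

variable {V : Type*} [Fintype V] {T : SimpleGraph V} [DecidableRel T.Adj] {v : V}

theorem nonempty_endLeaves_iff : (endLeaves T v).Nonempty ↔
    3 ≤ T.degree v ∧ ∃ (u : V) (p : T.Walk u v), IsEndPath T p :=
  ⟨fun h => ⟨three_le_degree_of_mem_endLeaves h.some_mem, h⟩, And.right⟩

variable (hT : T.IsTree)

include hT

theorem pairwise_disjoint_endLeaves : Pairwise (Function.onFun Disjoint (endLeaves T)) := by
  refine fun v w hvw => Set.disjoint_left.2 fun u hv hw => ?_
  have hdisj := disjoint_endPalm hT (three_le_degree_of_mem_endLeaves hv)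
    (three_le_degree_of_mem_endLeaves hw) hvw
  exact hdisj.notMem_of_mem_left (endLeaves_subset_endPalm v hv) (endLeaves_subset_endPalm w hw)

theorem sum_ncard_endLeaves_le : ∑ v, (endLeaves T v).ncard ≤ {v | T.degree v = 1}.ncard := by
  rw [← finsum_eq_sum_of_fintype, ← Set.ncard_iUnion_of_finite (fun _ => Set.toFinite _)
    (pairwise_disjoint_endLeaves hT)]
  exact Set.ncard_le_ncard (Set.iUnion_subset fun v _ => degree_eq_one_of_mem_endLeaves)

variable [DecidablePred (IsEndBranch T)] [DecidablePred fun v => (endLeaves T v).Nonempty]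

theorem sum_ncard_endLeaves_add_card_le :
    ∑ v with IsEndBranch T v, (endLeaves T v).ncard + Finset.card {v | (endLeaves T v).Nonempty} ≤
      {v | T.degree v = 1}.ncard + Finset.card {v | IsEndBranch T v} := by
  -- A branch with an end-path that is not an end-branch uses up one leaf.
  refine le_trans ?_ (Nat.add_le_add_right (sum_ncard_endLeaves_le hT) _)
  rw [Finset.card_filter, Finset.card_filter, Finset.sum_filter, ← Finset.sum_add_distrib,
    ← Finset.sum_add_distrib]
  refine Finset.sum_le_sum fun v _ => ?_
  have hbranch : IsEndBranch T v ↔ 1 < (endLeaves T v).ncard :=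
    isEndBranch_iff_nontrivial_endLeaves.trans Set.one_lt_ncard_iff_nontrivial.symm
  have hnonempty : (endLeaves T v).Nonempty ↔ 0 < (endLeaves T v).ncard := (Set.ncard_pos).symm
  simp only [hbranch, hnonempty]
  split_ifs <;> omega

theorem sum_locatingChromaticNumber_endPalm_add_card_le :
    ∑ v with IsEndBranch T v, locatingChromaticNumber (T.induce (endPalm T v)) +
        Finset.card {v | (endLeaves T v).Nonempty} ≤
      {v | T.degree v = 1}.ncard + 2 * Finset.card {v | IsEndBranch T v} := by
  have hpalm : ∑ v with IsEndBranch T v, locatingChromaticNumber (T.induce (endPalm T v)) ≤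
      ∑ v with IsEndBranch T v, ((endLeaves T v).ncard + 1) :=
    Finset.sum_le_sum fun v hv =>
      locatingChromaticNumber_induce_endPalm_le hT ((Finset.mem_filter_univ v).1 hv)
  rw [Finset.sum_add_distrib, ← Finset.card_eq_sum_ones] at hpalm
  have := sum_ncard_endLeaves_add_card_le hT
  omega

end LeafCount

/-- Let `T` be a tree having `l` leaves, `β` branches with at least one
end-path, and `b ≥ 1` branches with at least two end-paths (end-branches), with end-palms
`P_1, …, P_b`. Then `χ_L(T) ≤ 2 - 2b + ∑ χ_L(P_i) ≤ l - β + 2 ≤ l - b + 2`. -/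
theorem locatingChromaticNumber_tree_le_chain {V : Type*} [Fintype V]
    (T : SimpleGraph V) [DecidableRel T.Adj] (hT : T.IsTree)
    (l β b : ℕ)
    (hl : l = {v | T.degree v = 1}.ncard)
    (hβ : β = {v | 3 ≤ T.degree v ∧ ∃ (u : V) (p : T.Walk u v), IsEndPath T p}.ncard)
    (hbdef : b = {v | IsEndBranch T v}.ncard)
    (hb : 1 ≤ b) :
    (locatingChromaticNumber T : ℤ) ≤
        2 - 2 * (b : ℤ) +
          ∑ᶠ v ∈ {v | IsEndBranch T v},
            (locatingChromaticNumber (T.induce (endPalm T v)) : ℤ) ∧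
      2 - 2 * (b : ℤ) +
          ∑ᶠ v ∈ {v | IsEndBranch T v},
            (locatingChromaticNumber (T.induce (endPalm T v)) : ℤ) ≤
        (l : ℤ) - (β : ℤ) + 2 ∧
      (l : ℤ) - (β : ℤ) + 2 ≤ (l : ℤ) - (b : ℤ) + 2 := by
  classical
  have hE : {v | IsEndBranch T v} = ({v | IsEndBranch T v} : Finset V) :=
    (Finset.coe_filter_univ _).symm
  have hB : {v | 3 ≤ T.degree v ∧ ∃ (u : V) (p : T.Walk u v), IsEndPath T p} =
      ({v | (endLeaves T v).Nonempty} : Finset V) := by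
    simp only [Finset.coe_filter_univ, nonempty_endLeaves_iff]
  have hcard : b ≤ β := by
    rw [hbdef, hβ]
    refine Set.ncard_le_ncard fun v hv => nonempty_endLeaves_iff.1 ?_
    exact (isEndBranch_iff_nontrivial_endLeaves.1 hv).nonempty
  have hglue := locatingChromaticNumber_add_two_mul_card_le hT
    (Set.nonempty_of_ncard_ne_zero (Nat.one_le_iff_ne_zero.1 (hbdef ▸ hb)))
  have hpalms := sum_locatingChromaticNumber_endPalm_add_card_le hT
  rw [hE, Set.ncard_coe_finset] at hbdef
  rw [hB, Set.ncard_coe_finset] at hβ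
  rw [← hbdef] at hglue hpalms
  rw [← hβ, ← hl] at hpalms
  rw [hE, finsum_mem_coe_finset, ← Nat.cast_sum]
  omega
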